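/- Let p be a prime and L an algebraic closure of 𝔽_p. For any nonzero a, d, j, k, m ∈ Lˣ, the vector (F,G) ∈ V₄ with F = aUX² + dWY² + jWXZ + kUYZ and G = mU is stable for the action of G₄ = SL₂(L)×SL₃(L)×Lˣ if and only if p ≠ 3. (Indeed Δ₄(F,G) = −27 a² d⁴ k⁴ j⁸ m⁶.) -/

import Mathlib

/- Zariski-closedness of a subset of affine n-space over L: it is the common zero locus
of a set of polynomial functions (with respect to the fixed coordinates). -/
def IsZariskiClosed {n : ℕ} {L : Type*} [CommRing L] (s : Set (Fin n → L)) : Prop :=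
  ∃ P : Set (MvPolynomial (Fin n) L), s = {x | ∀ p ∈ P, MvPolynomial.eval x p = 0}

/- The pair (F, G) ∈ V₄ with coordinates c (variables: inl 0,1 = U,W; inr 0,1,2 = X,Y,Z):
F = (aU+bW)X² + (cU+dW)Y² + (eU+fW)Z² + (gU+hW)XY + (iU+jW)XZ + (kU+lW)YZ, G = mU + nW. -/
noncomputable def toV4 {L : Type*} [CommRing L] (c : Fin 14 → L) :
    MvPolynomial (Fin 2 ⊕ Fin 3) L × MvPolynomial (Fin 2 ⊕ Fin 3) L :=
  ((MvPolynomial.C (c 0) * MvPolynomial.X (Sum.inl 0) + MvPolynomial.C (c 1) * MvPolynomial.X (Sum.inl 1)) * MvPolynomial.X (Sum.inr 0) ^ 2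
    + (MvPolynomial.C (c 2) * MvPolynomial.X (Sum.inl 0) + MvPolynomial.C (c 3) * MvPolynomial.X (Sum.inl 1)) * MvPolynomial.X (Sum.inr 1) ^ 2
    + (MvPolynomial.C (c 4) * MvPolynomial.X (Sum.inl 0) + MvPolynomial.C (c 5) * MvPolynomial.X (Sum.inl 1)) * MvPolynomial.X (Sum.inr 2) ^ 2
    + (MvPolynomial.C (c 6) * MvPolynomial.X (Sum.inl 0) + MvPolynomial.C (c 7) * MvPolynomial.X (Sum.inl 1)) * (MvPolynomial.X (Sum.inr 0) * MvPolynomial.X (Sum.inr 1))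
    + (MvPolynomial.C (c 8) * MvPolynomial.X (Sum.inl 0) + MvPolynomial.C (c 9) * MvPolynomial.X (Sum.inl 1)) * (MvPolynomial.X (Sum.inr 0) * MvPolynomial.X (Sum.inr 2))
    + (MvPolynomial.C (c 10) * MvPolynomial.X (Sum.inl 0) + MvPolynomial.C (c 11) * MvPolynomial.X (Sum.inl 1)) * (MvPolynomial.X (Sum.inr 1) * MvPolynomial.X (Sum.inr 2)),
   MvPolynomial.C (c 12) * MvPolynomial.X (Sum.inl 0) + MvPolynomial.C (c 13) * MvPolynomial.X (Sum.inl 1))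

/- Linear substitution of (U,W) by A ∈ SL₂(L) and of (X,Y,Z) by B ∈ SL₃(L). -/
noncomputable def sub4 {L : Type*} [CommRing L]
    (A : Matrix.SpecialLinearGroup (Fin 2) L) (B : Matrix.SpecialLinearGroup (Fin 3) L)
    (v : MvPolynomial (Fin 2 ⊕ Fin 3) L) : MvPolynomial (Fin 2 ⊕ Fin 3) L :=
  MvPolynomial.aeval
    (Sum.elim (fun i => ∑ j : Fin 2, MvPolynomial.C (A.1 i j) * MvPolynomial.X (Sum.inl j))
              (fun i => ∑ j : Fin 3, MvPolynomial.C (B.1 i j) * MvPolynomial.X (Sum.inr j))) v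

/- The action of G₄ = SL₂(L) × SL₃(L) × Lˣ on V₄:
(A, B, t)·(F, G) = (t⁻¹·F′, t³·G′), where F′, G′ are obtained by linear substitution. -/
noncomputable def act4 {L : Type*} [Field L]
    (g : Matrix.SpecialLinearGroup (Fin 2) L × Matrix.SpecialLinearGroup (Fin 3) L × Lˣ)
    (v : MvPolynomial (Fin 2 ⊕ Fin 3) L × MvPolynomial (Fin 2 ⊕ Fin 3) L) :
    MvPolynomial (Fin 2 ⊕ Fin 3) L × MvPolynomial (Fin 2 ⊕ Fin 3) L :=
  (((g.2.2 : L))⁻¹ • sub4 g.1 g.2.1 v.1, ((g.2.2 : L)) ^ 3 • sub4 g.1 g.2.1 v.2)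

/- Stability: the orbit of v (in the coordinate space of V₄ with respect to its monomial
basis) is Zariski-closed and the stabilizer of v in G₄ is finite. -/
def Stable4 {L : Type*} [Field L] (c : Fin 14 → L) : Prop :=
  IsZariskiClosed {c' : Fin 14 → L |
    ∃ g : Matrix.SpecialLinearGroup (Fin 2) L × Matrix.SpecialLinearGroup (Fin 3) L × Lˣ,
      toV4 c' = act4 g (toV4 c)} ∧
  {g : Matrix.SpecialLinearGroup (Fin 2) L × Matrix.SpecialLinearGroup (Fin 3) L × Lˣ |
      act4 g (toV4 c) = toV4 c}.Finite

/-!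
The binary quartic `G · disc₂(F)` is covariant under `G₄`, so its invariants `I` and `J` are
constant on orbits; on the dual cyclic vector `I = 0` and `J = 27 a d² k² j⁴ m³`.

If `3 ≠ 0`, these two equations cut out the orbit, which is therefore closed: a vector with `I = 0`
and `J ≠ 0` can be moved to one whose quartic has only `U⁴` and `UW³` terms, and then the two conics
can be normalised simultaneously. The stabilizer permutes the finitely many base points of
the pencil of conics, and the elements fixing `[0 : 0 : 1]` are scalar, so it is finite.

If `3 = 0`, a unipotent substitution removes the `UX²` term, after which a one-parameter subgroup
scales the vector to `0`; so `0` lies in the closure of the orbit but not in the orbit.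
-/

open MulAction
open scoped MatrixGroups RightActions LinearAlgebra.Projectivization

theorem IsZariskiClosed.zero_mem_of_forall_smul_mem {n : ℕ} {R : Type*} [CommRing R] [IsDomain R]
    [Infinite R] {s : Set (Fin n → R)} (hs : IsZariskiClosed s) {x : Fin n → R}
    (hx : ∀ t : R, t ≠ 0 → t • x ∈ s) : 0 ∈ s := by
  obtain ⟨P, rfl⟩ := hs
  intro f hf
  let F : Polynomial R := MvPolynomial.aeval (fun i => Polynomial.C (x i) * Polynomial.X) f
  have eval_F (t : R) : F.eval t = MvPolynomial.eval (t • x) f := by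
    rw [← Polynomial.coe_aeval_eq_eval, MvPolynomial.comp_aeval_apply]
    simp [MvPolynomial.aeval_eq_eval, Pi.smul_def, mul_comm t]
  have F_eq_zero : F = 0 :=
    F.eq_zero_of_infinite_isRoot ((Set.finite_singleton 0).infinite_compl.mono fun t ht =>
      (eval_F t).trans (hx t ht f hf))
  simpa [F_eq_zero] using (eval_F 0).symm

theorem finite_subgroup_of_forall_smul_mem {G H X : Type*} [Group G] [Group H] [MulAction H X]
    (Γ : Subgroup G) (φ : G →* H) (x : X) {s : Set X} (hs : s.Finite)
    (smul_mem : ∀ g ∈ Γ, φ g • x ∈ s) {t : Set G} (ht : t.Finite)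
    (mem_of_smul_eq : ∀ g ∈ Γ, φ g • x = x → g ∈ t) : Finite Γ := by
  let _ : MulAction Γ X := MulAction.compHom X (φ.comp Γ.subtype)
  have finite_orbit : (orbit Γ x).Finite :=
    hs.subset (Set.range_subset_iff.2 fun g => smul_mem g g.2)
  have finite_stabilizer : (stabilizer Γ x : Set Γ).Finite :=
    (ht.preimage Subtype.val_injective.injOn).subset fun g hg => mem_of_smul_eq g g.2 hg
  have := finite_orbit.to_subtype
  have := finite_stabilizer.to_subtype
  exact Finite.of_equiv _ (orbitProdStabilizerEquivGroup Γ x)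

/-- The binary quartic form `aU⁴ + bU³W + cU²W² + dUW³ + eW⁴`. -/
@[ext]
structure BinaryQuartic (R : Type*) where
  (a b c d e : R)

namespace BinaryQuartic

variable {R : Type*} [CommRing R]

/-- The invariant of degree two, normalised so that `4 I³ - J² = 27 disc`. -/
def I (f : BinaryQuartic R) : R := 12 * f.a * f.e - 3 * f.b * f.d + f.c ^ 2

/-- The invariant of degree three, normalised so that `4 I³ - J² = 27 disc`. -/
def J (f : BinaryQuartic R) : R :=
  72 * f.a * f.c * f.e + 9 * f.b * f.c * f.d - 27 * f.a * f.d ^ 2 - 27 * f.e * f.b ^ 2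
    - 2 * f.c ^ 3

/-- The quartic `f(A₀₀U + A₀₁W, A₁₀U + A₁₁W)`. -/
@[simps]
def comp (f : BinaryQuartic R) (A : Matrix (Fin 2) (Fin 2) R) : BinaryQuartic R where
  a := f.a * A 0 0 ^ 4 + f.b * (A 0 0 ^ 3 * A 1 0) + f.c * (A 0 0 ^ 2 * A 1 0 ^ 2)
    + f.d * (A 0 0 * A 1 0 ^ 3) + f.e * A 1 0 ^ 4
  b := f.a * (4 * A 0 0 ^ 3 * A 0 1) + f.b * (A 0 0 ^ 3 * A 1 1 + 3 * A 0 0 ^ 2 * A 0 1 * A 1 0)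
    + f.c * (2 * A 0 0 ^ 2 * A 1 0 * A 1 1 + 2 * A 0 0 * A 0 1 * A 1 0 ^ 2)
    + f.d * (A 0 1 * A 1 0 ^ 3 + 3 * A 0 0 * A 1 0 ^ 2 * A 1 1) + f.e * (4 * A 1 0 ^ 3 * A 1 1)
  c := f.a * (6 * A 0 0 ^ 2 * A 0 1 ^ 2)
    + f.b * (3 * A 0 0 ^ 2 * A 0 1 * A 1 1 + 3 * A 0 0 * A 0 1 ^ 2 * A 1 0)
    + f.c * (A 0 0 ^ 2 * A 1 1 ^ 2 + 4 * A 0 0 * A 0 1 * A 1 0 * A 1 1 + A 0 1 ^ 2 * A 1 0 ^ 2)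
    + f.d * (3 * A 0 1 * A 1 0 ^ 2 * A 1 1 + 3 * A 0 0 * A 1 0 * A 1 1 ^ 2)
    + f.e * (6 * A 1 0 ^ 2 * A 1 1 ^ 2)
  d := f.a * (4 * A 0 0 * A 0 1 ^ 3) + f.b * (A 0 1 ^ 3 * A 1 0 + 3 * A 0 0 * A 0 1 ^ 2 * A 1 1)
    + f.c * (2 * A 0 1 ^ 2 * A 1 0 * A 1 1 + 2 * A 0 0 * A 0 1 * A 1 1 ^ 2)
    + f.d * (A 0 0 * A 1 1 ^ 3 + 3 * A 0 1 * A 1 0 * A 1 1 ^ 2) + f.e * (4 * A 1 0 * A 1 1 ^ 3)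
  e := f.a * A 0 1 ^ 4 + f.b * (A 0 1 ^ 3 * A 1 1) + f.c * (A 0 1 ^ 2 * A 1 1 ^ 2)
    + f.d * (A 0 1 * A 1 1 ^ 3) + f.e * A 1 1 ^ 4

theorem I_comp (f : BinaryQuartic R) (A : Matrix (Fin 2) (Fin 2) R) :
    (f.comp A).I = A.det ^ 4 * f.I := by
  simp only [I, comp, Matrix.det_fin_two]
  ring

theorem J_comp (f : BinaryQuartic R) (A : Matrix (Fin 2) (Fin 2) R) :
    (f.comp A).J = A.det ^ 6 * f.J := by
  simp only [J, comp, Matrix.det_fin_two]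
  ring

end BinaryQuartic

/-- The ternary quadratic form `xx X² + yy Y² + zz Z² + xy XY + xz XZ + yz YZ`, given by its
coefficients so that characteristic two needs no special treatment. -/
@[ext]
structure TernaryQuadratic (R : Type*) where
  (xx yy zz xy xz yz : R)

namespace TernaryQuadratic

section CommRing

variable {R : Type*} [CommRing R]

@[simps]
instance : Add (TernaryQuadratic R) where
  add p q := ⟨p.xx + q.xx, p.yy + q.yy, p.zz + q.zz, p.xy + q.xy, p.xz + q.xz, p.yz + q.yz⟩

@[simps]
instance : SMul R (TernaryQuadratic R) where
  smul r q := ⟨r * q.xx, r * q.yy, r * q.zz, r * q.xy, r * q.xz, r * q.yz⟩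

/-- The value of the form `q` at the vector `v`. -/
def eval (q : TernaryQuadratic R) (v : Fin 3 → R) : R :=
  q.xx * v 0 ^ 2 + q.yy * v 1 ^ 2 + q.zz * v 2 ^ 2 + q.xy * (v 0 * v 1) + q.xz * (v 0 * v 2)
    + q.yz * (v 1 * v 2)

/-- The form obtained from `q` by the linear substitution `v ↦ B v`. -/
@[simps]
def comp (q : TernaryQuadratic R) (B : Matrix (Fin 3) (Fin 3) R) : TernaryQuadratic R where
  xx := q.eval (B.col 0)
  yy := q.eval (B.col 1)
  zz := q.eval (B.col 2)
  xy := QuadraticMap.polar q.eval (B.col 0) (B.col 1)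
  xz := QuadraticMap.polar q.eval (B.col 0) (B.col 2)
  yz := QuadraticMap.polar q.eval (B.col 1) (B.col 2)

/-- The discriminant `disc₂`. -/
def disc (q : TernaryQuadratic R) : R :=
  4 * q.xx * q.yy * q.zz + q.xy * q.xz * q.yz - q.xx * q.yz ^ 2 - q.yy * q.xz ^ 2
    - q.zz * q.xy ^ 2

/-- The coefficient of `r² s` in the discriminant of `r p + s q`. -/
def mixedDisc (p q : TernaryQuadratic R) : R :=
  4 * (p.xx * p.yy * q.zz + p.xx * q.yy * p.zz + q.xx * p.yy * p.zz)
    + (p.xy * p.xz * q.yz + p.xy * q.xz * p.yz + q.xy * p.xz * p.yz)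
    - (2 * p.xx * p.yz * q.yz + q.xx * p.yz ^ 2) - (2 * p.yy * p.xz * q.xz + q.yy * p.xz ^ 2)
    - (2 * p.zz * p.xy * q.xy + q.zz * p.xy ^ 2)

theorem eval_add (p q : TernaryQuadratic R) (v : Fin 3 → R) :
    (p + q).eval v = p.eval v + q.eval v := by
  simp only [eval, add_xx, add_yy, add_zz, add_xy, add_xz, add_yz]
  ring

theorem eval_smul (r : R) (q : TernaryQuadratic R) (v : Fin 3 → R) :
    (r • q).eval v = r * q.eval v := by
  simp only [eval, smul_xx, smul_yy, smul_zz, smul_xy, smul_xz, smul_yz]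
  ring

theorem eval_comp (q : TernaryQuadratic R) (B : Matrix (Fin 3) (Fin 3) R) (v : Fin 3 → R) :
    (q.comp B).eval v = q.eval (B.mulVec v) := by
  simp only [eval, comp, QuadraticMap.polar, Matrix.col_apply, Pi.add_apply, Matrix.mulVec,
    dotProduct, Fin.sum_univ_three]
  ring

theorem ext_of_eval_eq {p q : TernaryQuadratic R} (h : ∀ v, p.eval v = q.eval v) : p = q := by
  have hx : p.xx = q.xx := by simpa [eval] using h ![1, 0, 0]
  have hy : p.yy = q.yy := by simpa [eval] using h ![0, 1, 0]
  have hz : p.zz = q.zz := by simpa [eval] using h ![0, 0, 1]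
  ext
  · exact hx
  · exact hy
  · exact hz
  · simpa [eval, hx, hy] using h ![1, 1, 0]
  · simpa [eval, hx, hz] using h ![1, 0, 1]
  · simpa [eval, hy, hz] using h ![0, 1, 1]

theorem comp_comp (q : TernaryQuadratic R) (B B' : Matrix (Fin 3) (Fin 3) R) :
    (q.comp B).comp B' = q.comp (B * B') :=
  ext_of_eval_eq fun v => by simp only [eval_comp, Matrix.mulVec_mulVec]

theorem comp_one (q : TernaryQuadratic R) : q.comp 1 = q :=
  ext_of_eval_eq fun v => by rw [eval_comp, Matrix.one_mulVec]

theorem disc_comp (q : TernaryQuadratic R) (B : Matrix (Fin 3) (Fin 3) R) :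
    (q.comp B).disc = B.det ^ 2 * q.disc := by
  simp only [disc, comp, eval, QuadraticMap.polar, Matrix.col_apply, Pi.add_apply,
    Matrix.det_fin_three]
  ring

theorem mixedDisc_comp (p q : TernaryQuadratic R) (B : Matrix (Fin 3) (Fin 3) R) :
    mixedDisc (p.comp B) (q.comp B) = B.det ^ 2 * mixedDisc p q := by
  simp only [mixedDisc, comp, eval, QuadraticMap.polar, Matrix.col_apply, Pi.add_apply,
    Matrix.det_fin_three]
  ring

theorem disc_smul (r : R) (q : TernaryQuadratic R) : (r • q).disc = r ^ 3 * q.disc := by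
  simp only [disc, smul_xx, smul_yy, smul_zz, smul_xy, smul_xz, smul_yz]
  ring

theorem mixedDisc_smul_smul (r : R) (p q : TernaryQuadratic R) :
    mixedDisc (r • p) (r • q) = r ^ 3 * mixedDisc p q := by
  simp only [mixedDisc, smul_xx, smul_yy, smul_zz, smul_xy, smul_xz, smul_yz]
  ring

theorem disc_smul_add_smul (p q : TernaryQuadratic R) (r s : R) :
    (r • p + s • q).disc
      = r ^ 3 * p.disc + r ^ 2 * s * mixedDisc p q + r * s ^ 2 * mixedDisc q p
        + s ^ 3 * q.disc := by
  simp only [disc, mixedDisc, add_xx, add_yy, add_zz, add_xy, add_xz, add_yz, smul_xx, smul_yy,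
    smul_zz, smul_xy, smul_xz, smul_yz]
  ring

theorem mixedDisc_smul_add_smul (p q : TernaryQuadratic R) (r s r' s' : R) :
    mixedDisc (r • p + s • q) (r' • p + s' • q)
      = 3 * r ^ 2 * r' * p.disc + (r ^ 2 * s' + 2 * r * s * r') * mixedDisc p q
        + (s ^ 2 * r' + 2 * r * s * s') * mixedDisc q p + 3 * s ^ 2 * s' * q.disc := by
  simp only [disc, mixedDisc, add_xx, add_yy, add_zz, add_xy, add_xz, add_yz, smul_xx, smul_yy,
    smul_zz, smul_xy, smul_xz, smul_yz]
  ring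

instance : MulAction SL(3, R)ᵐᵒᵖ (TernaryQuadratic R) where
  smul B q := q.comp B.unop
  one_smul := comp_one
  mul_smul _ _ q := (comp_comp q _ _).symm

theorem smul_eq_comp (q : TernaryQuadratic R) (B : SL(3, R)) : q <• B = q.comp B :=
  rfl

theorem disc_op_smul (q : TernaryQuadratic R) (B : SL(3, R)) : (q <• B).disc = q.disc := by
  rw [smul_eq_comp, disc_comp, B.det_coe, one_pow, one_mul]

theorem mixedDisc_op_smul (p q : TernaryQuadratic R) (B : SL(3, R)) :
    mixedDisc (p <• B) (q <• B) = mixedDisc p q := by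
  rw [smul_eq_comp, smul_eq_comp, mixedDisc_comp, B.det_coe, one_pow, one_mul]

/-- The form `aX² + kYZ`, the coefficient of `U` in a dual cyclic pencil. -/
@[simps]
def dualCyclicU (a k : R) : TernaryQuadratic R := ⟨a, 0, 0, 0, 0, k⟩

/-- The form `dY² + jXZ`, the coefficient of `W` in a dual cyclic pencil. -/
@[simps]
def dualCyclicW (d j : R) : TernaryQuadratic R := ⟨0, d, 0, 0, j, 0⟩

theorem disc_dualCyclicU (a k : R) : (dualCyclicU a k).disc = -(a * k ^ 2) := by
  simp [disc]

theorem disc_dualCyclicW (d j : R) : (dualCyclicW d j).disc = -(d * j ^ 2) := by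
  simp [disc]

theorem mixedDisc_dualCyclicU_dualCyclicW (a d j k : R) :
    mixedDisc (dualCyclicU a k) (dualCyclicW d j) = 0 := by
  simp [mixedDisc]

theorem mixedDisc_dualCyclicW_dualCyclicU (a d j k : R) :
    mixedDisc (dualCyclicW d j) (dualCyclicU a k) = 0 := by
  simp [mixedDisc]

/-- A substitution fixing the point `[0 : 0 : 1]` of the conic `aX² + kYZ`, and the conic itself
when `k e = a s`. -/
def conicShear (s e : R) : SL(3, R) :=
  ⟨!![1, s, 0; 0, 1, 0; -2 * e, -e * s, 1], by simp [Matrix.det_fin_three]⟩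

/-- The substitution exchanging `Y` and `Z`, with a sign making it unimodular. -/
def swapYZ : SL(3, R) :=
  ⟨!![-1, 0, 0; 0, 0, 1; 0, 1, 0], by simp [Matrix.det_fin_three]⟩

theorem dualCyclicU_smul_conicShear {a k s e : R} (h : k * e = a * s) :
    dualCyclicU a k <• conicShear s e = dualCyclicU a k := by
  rw [smul_eq_comp]
  ext <;> simp only [conicShear, dualCyclicU, comp, eval, QuadraticMap.polar, Matrix.col_apply,
    Pi.add_apply, Matrix.of_apply, Matrix.cons_val] <;> grind

theorem dualCyclicU_smul_swapYZ (a k : R) :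
    dualCyclicU a k <• (swapYZ : SL(3, R)) = dualCyclicU a k := by
  rw [smul_eq_comp]
  ext <;> simp [eval, QuadraticMap.polar, swapYZ]

theorem zz_smul_swapYZ (q : TernaryQuadratic R) : (q <• (swapYZ : SL(3, R))).zz = q.yy := by
  rw [smul_eq_comp]
  simp [eval, swapYZ]

end CommRing

section IsAlgClosed

variable {K : Type*} [Field K] {p q : TernaryQuadratic K}

variable (q) in
theorem exists_smul_zz_eq_zero [IsAlgClosed K] : ∃ B : SL(3, K), (q <• B).zz = 0 := by
  by_cases hzz : q.zz = 0
  · exact ⟨1, by rwa [MulOpposite.op_one, one_smul]⟩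
  obtain ⟨s, hs⟩ := IsAlgClosed.exists_root _
    ((Polynomial.degree_quadratic (b := q.yz) (c := q.yy) hzz).trans_ne two_ne_zero)
  simp only [Polynomial.IsRoot, Polynomial.eval_add, Polynomial.eval_mul, Polynomial.eval_C,
    Polynomial.eval_pow, Polynomial.eval_X] at hs
  let B : SL(3, K) := ⟨!![-1, 0, 0; 0, 0, 1; 0, 1, s], by simp [Matrix.det_fin_three]⟩
  refine ⟨B, ?_⟩
  rw [smul_eq_comp]
  simp only [B, comp_zz, eval, Matrix.col_apply, Matrix.of_apply, Matrix.cons_val]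
  linear_combination hs

theorem exists_smul_yz_ne_zero (hzz : q.zz = 0) (hq : q.disc ≠ 0) :
    ∃ B : SL(3, K), (q <• B).zz = 0 ∧ (q <• B).yz ≠ 0 := by
  by_cases hyz : q.yz = 0
  · have hxz : q.xz ≠ 0 := fun hxz => hq (by simp [disc, hzz, hyz, hxz])
    let B : SL(3, K) := ⟨!![0, 1, 0; -1, 0, 0; 0, 0, 1], by simp [Matrix.det_fin_three]⟩
    refine ⟨B, ?_, ?_⟩ <;> rw [smul_eq_comp] <;> simp [B, eval, QuadraticMap.polar, hzz, hxz]
  · exact ⟨1, by simpa using ⟨hzz, hyz⟩⟩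

theorem exists_smul_eq_dualCyclicU_of_zz_eq_zero (hzz : q.zz = 0) (hyz : q.yz ≠ 0) :
    ∃ (B : SL(3, K)) (a k : K), q <• B = dualCyclicU a k := by
  let B : SL(3, K) := ⟨!![1, 0, 0; -q.xz / q.yz, 1, 0;
    (2 * q.yy * q.xz / q.yz - q.xy) / q.yz, -q.yy / q.yz, 1], by simp [Matrix.det_fin_three]⟩
  refine ⟨B, (q.comp B).xx, q.yz, ?_⟩
  rw [smul_eq_comp]
  ext
  · rfl
  all_goals simp only [B, hzz, dualCyclicU, comp, eval, QuadraticMap.polar, Matrix.col_apply,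
    Pi.add_apply, Matrix.of_apply, Matrix.cons_val]
  all_goals field_simp
  all_goals ring

theorem exists_smul_eq_dualCyclicU [IsAlgClosed K] (hq : q.disc ≠ 0) :
    ∃ (B : SL(3, K)) (a k : K), q <• B = dualCyclicU a k := by
  obtain ⟨B₁, hzz⟩ := exists_smul_zz_eq_zero q
  obtain ⟨B₂, hzz, hyz⟩ := exists_smul_yz_ne_zero hzz (by rwa [disc_op_smul])
  obtain ⟨B₃, a, k, h⟩ := exists_smul_eq_dualCyclicU_of_zz_eq_zero hzz hyz
  exact ⟨B₁ * B₂ * B₃, a, k, by simpa only [MulOpposite.op_mul, mul_smul] using h⟩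

variable {a k : K}

variable (q) in
theorem exists_smul_conicShear_yy_eq_zero [IsAlgClosed K] (ha : a ≠ 0) (hk : k ≠ 0)
    (hzz : q.zz ≠ 0) : ∃ s, (q <• conicShear s (a * s / k)).yy = 0 := by
  obtain ⟨s, hs⟩ := IsAlgClosed.exists_root
    (.C (q.zz * (a / k) ^ 2) * .X ^ 4 - .C (q.xz * (a / k)) * .X ^ 3
      + .C (q.xx - q.yz * (a / k)) * .X ^ 2 + .C q.xy * .X + .C q.yy : Polynomial K) <| by
    rw [show Polynomial.degree _ = 4 by compute_degree!]
    decide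
  refine ⟨s, ?_⟩
  simp only [Polynomial.IsRoot, Polynomial.eval_add, Polynomial.eval_sub, Polynomial.eval_mul,
    Polynomial.eval_C, Polynomial.eval_pow, Polynomial.eval_X] at hs
  rw [smul_eq_comp]
  simp only [conicShear, comp_yy, eval, Matrix.col_apply, Matrix.of_apply, Matrix.cons_val]
  linear_combination hs

theorem exists_smul_dualCyclicU_eq_and_zz_eq_zero [IsAlgClosed K] (ha : a ≠ 0) (hk : k ≠ 0) :
    ∃ B : SL(3, K), dualCyclicU a k <• B = dualCyclicU a k ∧ (q <• B).zz = 0 := by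
  by_cases hzz : q.zz = 0
  · exact ⟨1, by simpa using hzz⟩
  obtain ⟨s, hyy⟩ := exists_smul_conicShear_yy_eq_zero q ha hk hzz
  refine ⟨conicShear s (a * s / k) * swapYZ, ?_, ?_⟩ <;> rw [MulOpposite.op_mul, mul_smul]
  · rw [dualCyclicU_smul_conicShear (mul_div_cancel₀ _ hk), dualCyclicU_smul_swapYZ]
  · rw [zz_smul_swapYZ, hyy]

theorem xz_ne_zero_of_mixedDisc_eq_zero (h3 : (3 : K) ≠ 0) (hk : k ≠ 0) (hzz : q.zz = 0)
    (hq : q.disc ≠ 0) (h₁ : mixedDisc (dualCyclicU a k) q = 0)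
    (h₂ : mixedDisc q (dualCyclicU a k) = 0) : q.xz ≠ 0 := by
  intro hxz
  simp only [disc, mixedDisc, dualCyclicU, hzz, hxz] at hq h₁ h₂
  grind

theorem exists_smul_eq_dualCyclicW (hk : k ≠ 0) (hzz : q.zz = 0)
    (hxz : q.xz ≠ 0) (h₁ : mixedDisc (dualCyclicU a k) q = 0)
    (h₂ : mixedDisc q (dualCyclicU a k) = 0) :
    ∃ (B : SL(3, K)) (d j : K), dualCyclicU a k <• B = dualCyclicU a k ∧
      q <• B = dualCyclicW d j := by
  set B : SL(3, K) := conicShear (-q.yz / q.xz) (a * (-q.yz / q.xz) / k) with hB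
  have hU : dualCyclicU a k <• B = dualCyclicU a k :=
    dualCyclicU_smul_conicShear (mul_div_cancel₀ _ hk)
  have zz_eq : (q <• B).zz = 0 := by
    rw [smul_eq_comp]
    simp [hB, conicShear, eval, hzz]
  have xz_eq : (q <• B).xz = q.xz := by
    rw [smul_eq_comp]
    simp only [hB, hzz, conicShear, comp, eval, QuadraticMap.polar, Matrix.col_apply, Pi.add_apply,
      Matrix.of_apply, Matrix.cons_val]
    ring
  have yz_eq : (q <• B).yz = 0 := by
    rw [smul_eq_comp]
    simp only [hB, hzz, conicShear, comp, eval, QuadraticMap.polar, Matrix.col_apply, Pi.add_apply,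
      Matrix.of_apply, Matrix.cons_val]
    field
  rw [← mixedDisc_op_smul _ _ B, hU] at h₁ h₂
  have xx_eq : (q <• B).xx = 0 := by simpa [mixedDisc, zz_eq, yz_eq, hk] using h₁
  have xy_eq : (q <• B).xy = 0 := by
    simpa [mixedDisc, zz_eq, yz_eq, xx_eq, xz_eq, hxz, hk] using h₂
  exact ⟨B, (q <• B).yy, q.xz, hU, TernaryQuadratic.ext xx_eq rfl zz_eq xy_eq xz_eq yz_eq⟩

theorem exists_smul_eq_dualCyclic [IsAlgClosed K] (h3 : (3 : K) ≠ 0) (hp : p.disc ≠ 0)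
    (hq : q.disc ≠ 0) (hpq : mixedDisc p q = 0) (hqp : mixedDisc q p = 0) :
    ∃ (B : SL(3, K)) (a d j k : K), p <• B = dualCyclicU a k ∧ q <• B = dualCyclicW d j := by
  obtain ⟨B₁, a, k, hU⟩ := exists_smul_eq_dualCyclicU hp
  have hak : a ≠ 0 ∧ k ≠ 0 := by simpa [← disc_op_smul p B₁, hU, disc_dualCyclicU] using hp
  obtain ⟨B₂, hU₂, hzz⟩ := exists_smul_dualCyclicU_eq_and_zz_eq_zero (q := q <• B₁) hak.1 hak.2
  have hU₂₁ : p <• B₁ <• B₂ = dualCyclicU a k := by rw [hU, hU₂]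
  rw [← disc_op_smul _ B₁, ← disc_op_smul _ B₂] at hq
  rw [← mixedDisc_op_smul _ _ B₁, ← mixedDisc_op_smul _ _ B₂, hU₂₁] at hpq hqp
  have hxz := xz_ne_zero_of_mixedDisc_eq_zero h3 hak.2 hzz hq hpq hqp
  obtain ⟨B₃, d, j, hU₃, hW⟩ := exists_smul_eq_dualCyclicW hak.2 hzz hxz hpq hqp
  refine ⟨B₁ * B₂ * B₃, a, d, j, k, ?_, ?_⟩ <;> simp only [MulOpposite.op_mul, mul_smul]
  · rw [hU₂₁, hU₃]
  · exact hW

end IsAlgClosed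

variable {R : Type*} [CommRing R]

/-- The ternary quadratic form `q` as a polynomial in `X, Y, Z`. -/
noncomputable def toPoly (q : TernaryQuadratic R) :
    MvPolynomial (Fin 2 ⊕ Fin 3) R :=
  .C q.xx * .X (.inr 0) ^ 2 + .C q.yy * .X (.inr 1) ^ 2 + .C q.zz * .X (.inr 2) ^ 2
    + .C q.xy * (.X (.inr 0) * .X (.inr 1)) + .C q.xz * (.X (.inr 0) * .X (.inr 2))
    + .C q.yz * (.X (.inr 1) * .X (.inr 2))

theorem toPoly_smul (r : R) (q : TernaryQuadratic R) : (r • q).toPoly = .C r * q.toPoly := by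
  simp only [toPoly, smul_xx, smul_yy, smul_zz, smul_xy, smul_xz, smul_yz, map_mul]
  ring

theorem toPoly_smul_add_smul (r s : R) (p q : TernaryQuadratic R) :
    (r • p + s • q).toPoly = .C r * p.toPoly + .C s * q.toPoly := by
  simp only [toPoly, add_xx, add_yy, add_zz, add_xy, add_xz, add_yz, smul_xx,
    smul_yy, smul_zz, smul_xy, smul_xz, smul_yz, map_add, map_mul]
  ring

theorem eval_toPoly (q : TernaryQuadratic R) (x : Fin 2 → R) (y : Fin 3 → R) :
    MvPolynomial.eval (Sum.elim x y) q.toPoly = q.eval y := by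
  simp [toPoly, eval]

theorem sub4_toPoly (q : TernaryQuadratic R) (A : SL(2, R)) (B : SL(3, R)) :
    sub4 A B q.toPoly = (q.comp B).toPoly := by
  simp only [sub4, toPoly, comp, eval, QuadraticMap.polar, Matrix.col_apply, Pi.add_apply, map_add,
    map_sub, map_mul, map_pow, MvPolynomial.aeval_X, MvPolynomial.algHom_C,
    MvPolynomial.algebraMap_eq, Sum.elim_inr, Fin.sum_univ_three]
  ring

end TernaryQuadratic

/-- The group `SL₂ × SL₃ × Rˣ` acting on `V₄`. -/
abbrev G₄ (R : Type*) [CommRing R] := SL(2, R) × SL(3, R) × Rˣ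

/-- A vector `(F, G)` of `V₄`, where `F = U conicU + W conicW` and `G = m U + n W`. -/
@[ext]
structure V4 (R : Type*) where
  (conicU conicW : TernaryQuadratic R)
  (m n : R)

namespace V4

open TernaryQuadratic

section CommRing

variable {R : Type*} [CommRing R]

/-- The vector with the given coordinates, in the order used by `toV4`. -/
@[simps]
def ofCoords (c : Fin 14 → R) : V4 R where
  conicU := ⟨c 0, c 2, c 4, c 6, c 8, c 10⟩
  conicW := ⟨c 1, c 3, c 5, c 7, c 9, c 11⟩
  m := c 12
  n := c 13

/-- The linear substitution `A` in `(U, W)`. -/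
@[simps]
def substUW (v : V4 R) (A : Matrix (Fin 2) (Fin 2) R) : V4 R where
  conicU := A 0 0 • v.conicU + A 1 0 • v.conicW
  conicW := A 0 1 • v.conicU + A 1 1 • v.conicW
  m := A 0 0 * v.m + A 1 0 * v.n
  n := A 0 1 * v.m + A 1 1 * v.n

/-- The linear substitution `B` in `(X, Y, Z)`. -/
@[simps]
def substXYZ (v : V4 R) (B : Matrix (Fin 3) (Fin 3) R) : V4 R where
  conicU := v.conicU.comp B
  conicW := v.conicW.comp B
  m := v.m
  n := v.n

/-- The scaling `(F, G) ↦ (t⁻¹ F, t³ G)`. -/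
@[simps]
def scale (v : V4 R) (t : Rˣ) : V4 R where
  conicU := (↑t⁻¹ : R) • v.conicU
  conicW := (↑t⁻¹ : R) • v.conicW
  m := t ^ 3 * v.m
  n := t ^ 3 * v.n

/-- Linear substitution reverses products, so `G₄` acts on the right. -/
instance : SMul (G₄ R)ᵐᵒᵖ (V4 R) where
  smul g v := ((v.substXYZ g.unop.2.1).substUW g.unop.1).scale g.unop.2.2

theorem smul_eq (v : V4 R) (g : G₄ R) :
    v <• g = ((v.substXYZ g.2.1).substUW g.1).scale g.2.2 :=
  rfl

instance : MulAction (G₄ R)ᵐᵒᵖ (V4 R) where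
  one_smul v := by
    rw [← MulOpposite.op_one, smul_eq]
    ext1
    · exact ext_of_eval_eq fun x => by simp [eval_smul, eval_add, comp_one]
    · exact ext_of_eval_eq fun x => by simp [eval_smul, eval_add, comp_one]
    · simp
    · simp
  mul_smul g h v := by
    rw [← g.op_unop, ← h.op_unop, ← MulOpposite.op_mul, smul_eq, smul_eq, smul_eq]
    ext1
    · refine ext_of_eval_eq fun x => ?_
      simp only [scale, substUW, substXYZ, eval_smul, eval_add, eval_comp, Matrix.mulVec_mulVec,
        Prod.fst_mul, Prod.snd_mul, Matrix.SpecialLinearGroup.coe_mul, Matrix.mul_apply,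
        Fin.sum_univ_two, mul_inv_rev, Units.val_mul]
      ring
    · refine ext_of_eval_eq fun x => ?_
      simp only [scale, substUW, substXYZ, eval_smul, eval_add, eval_comp, Matrix.mulVec_mulVec,
        Prod.fst_mul, Prod.snd_mul, Matrix.SpecialLinearGroup.coe_mul, Matrix.mul_apply,
        Fin.sum_univ_two, mul_inv_rev, Units.val_mul]
      ring
    · simp only [scale, substUW, substXYZ, Prod.fst_mul, Prod.snd_mul, Units.val_mul,
        Matrix.SpecialLinearGroup.coe_mul, Matrix.mul_apply, Fin.sum_univ_two]
      ring
    · simp only [scale, substUW, substXYZ, Prod.fst_mul, Prod.snd_mul, Units.val_mul,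
        Matrix.SpecialLinearGroup.coe_mul, Matrix.mul_apply, Fin.sum_univ_two]
      ring

/-- The binary quartic `G · disc₂(F)`. -/
def quartic (v : V4 R) : BinaryQuartic R where
  a := v.m * v.conicU.disc
  b := v.m * mixedDisc v.conicU v.conicW + v.n * v.conicU.disc
  c := v.m * mixedDisc v.conicW v.conicU + v.n * mixedDisc v.conicU v.conicW
  d := v.m * v.conicW.disc + v.n * mixedDisc v.conicW v.conicU
  e := v.n * v.conicW.disc

theorem quartic_e_eq_zero {v : V4 R} (hn : v.n = 0) : v.quartic.e = 0 := by
  simp only [quartic, hn, zero_mul]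

theorem quartic_substUW (v : V4 R) (A : Matrix (Fin 2) (Fin 2) R) :
    (v.substUW A).quartic = v.quartic.comp A := by
  ext <;>
  simp only [quartic, BinaryQuartic.comp, substUW, disc_smul_add_smul, mixedDisc_smul_add_smul] <;>
  ring

theorem quartic_substXYZ (v : V4 R) (B : SL(3, R)) : (v.substXYZ B).quartic = v.quartic := by
  simp only [quartic, substXYZ, disc_comp, mixedDisc_comp, B.det_coe, one_pow, one_mul]

theorem quartic_scale (v : V4 R) (t : Rˣ) : (v.scale t).quartic = v.quartic := by
  have h : (t : R) ^ 3 * (↑t⁻¹ : R) ^ 3 = 1 := by rw [← mul_pow, t.mul_inv, one_pow]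
  ext <;> simp only [quartic, scale, disc_smul, mixedDisc_smul_smul] <;> grind

theorem quartic_smul (v : V4 R) (g : G₄ R) : (v <• g).quartic = v.quartic.comp g.1 := by
  rw [smul_eq, quartic_scale, quartic_substUW, quartic_substXYZ]

theorem I_quartic_eq_of_mem_orbit {v w : V4 R} (h : w ∈ orbit (G₄ R)ᵐᵒᵖ v) :
    w.quartic.I = v.quartic.I := by
  obtain ⟨g, rfl⟩ := h
  rw [← g.op_unop, quartic_smul, BinaryQuartic.I_comp, g.unop.1.det_coe, one_pow, one_mul]

theorem J_quartic_eq_of_mem_orbit {v w : V4 R} (h : w ∈ orbit (G₄ R)ᵐᵒᵖ v) :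
    w.quartic.J = v.quartic.J := by
  obtain ⟨g, rfl⟩ := h
  rw [← g.op_unop, quartic_smul, BinaryQuartic.J_comp, g.unop.1.det_coe, one_pow, one_mul]

/-- The pair of polynomials `(F, G)` with the given coefficients. -/
noncomputable def toPoly (v : V4 R) :
    MvPolynomial (Fin 2 ⊕ Fin 3) R × MvPolynomial (Fin 2 ⊕ Fin 3) R :=
  (.X (.inl 0) * v.conicU.toPoly + .X (.inl 1) * v.conicW.toPoly,
    .C v.m * .X (.inl 0) + .C v.n * .X (.inl 1))

theorem toV4_eq_toPoly (c : Fin 14 → R) : toV4 c = (ofCoords c).toPoly := by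
  refine Prod.ext ?_ rfl
  simp only [toV4, toPoly, TernaryQuadratic.toPoly, ofCoords]
  ring

theorem eval_toPoly_fst (v : V4 R) (x : Fin 2 → R) (y : Fin 3 → R) :
    MvPolynomial.eval (Sum.elim x y) v.toPoly.1
      = x 0 * v.conicU.eval y + x 1 * v.conicW.eval y := by
  simp [toPoly, eval_toPoly]

theorem eval_toPoly_snd (v : V4 R) (x : Fin 2 → R) (y : Fin 3 → R) :
    MvPolynomial.eval (Sum.elim x y) v.toPoly.2 = v.m * x 0 + v.n * x 1 := by
  simp [toPoly]

theorem toPoly_injective : Function.Injective (toPoly : V4 R → _) := by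
  intro v w h
  have eval_fst (x : Fin 2 → R) (y : Fin 3 → R) := eval_toPoly_fst v x y
  have eval_snd (x : Fin 2 → R) := eval_toPoly_snd v x 0
  simp only [h, eval_toPoly_fst] at eval_fst
  simp only [h, eval_toPoly_snd] at eval_snd
  ext1
  · exact ext_of_eval_eq fun y => by simpa using (eval_fst ![1, 0] y).symm
  · exact ext_of_eval_eq fun y => by simpa using (eval_fst ![0, 1] y).symm
  · simpa using (eval_snd ![1, 0]).symm
  · simpa using (eval_snd ![0, 1]).symm

theorem sub4_toPoly_fst (v : V4 R) (A : SL(2, R)) (B : SL(3, R)) :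
    sub4 A B v.toPoly.1 = ((v.substXYZ B).substUW A).toPoly.1 := by
  have sub4_conic (q : TernaryQuadratic R) := q.sub4_toPoly A B
  unfold sub4 at sub4_conic ⊢
  simp only [toPoly, map_add, map_mul, sub4_conic]
  simp only [MvPolynomial.aeval_X, Sum.elim_inl, Fin.sum_univ_two, substUW, substXYZ,
    toPoly_smul_add_smul]
  ring

theorem sub4_toPoly_snd (v : V4 R) (A : SL(2, R)) (B : SL(3, R)) :
    sub4 A B v.toPoly.2 = ((v.substXYZ B).substUW A).toPoly.2 := by
  simp only [sub4, toPoly, map_add, map_mul, MvPolynomial.aeval_X, MvPolynomial.algHom_C,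
    MvPolynomial.algebraMap_eq, Sum.elim_inl, Fin.sum_univ_two, substUW, substXYZ]
  ring

theorem toPoly_scale (v : V4 R) (t : Rˣ) :
    (v.scale t).toPoly = ((↑t⁻¹ : R) • v.toPoly.1, (t : R) ^ 3 • v.toPoly.2) := by
  ext1
  · simp only [toPoly, scale, TernaryQuadratic.toPoly_smul, MvPolynomial.smul_eq_C_mul]
    ring
  · simp only [toPoly, scale, MvPolynomial.smul_eq_C_mul, map_mul]
    ring

end CommRing

section Field

variable {L : Type*} [Field L]

theorem toPoly_op_smul (v : V4 L) (g : G₄ L) : (v <• g).toPoly = act4 g v.toPoly := by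
  rw [smul_eq, toPoly_scale, ← sub4_toPoly_fst, ← sub4_toPoly_snd, Units.val_inv_eq_inv_val]
  rfl

theorem toV4_eq_act4_iff (c : Fin 14 → L) (v : V4 L) (g : G₄ L) :
    toV4 c = act4 g v.toPoly ↔ v <• g = ofCoords c := by
  rw [toV4_eq_toPoly, ← toPoly_op_smul, toPoly_injective.eq_iff, eq_comm]

/-- Stability for the action of `G₄` on `V₄`; closedness refers to the fourteen coordinates. -/
def IsStable (v : V4 L) : Prop :=
  IsZariskiClosed (ofCoords ⁻¹' orbit (G₄ L)ᵐᵒᵖ v) ∧ Finite (stabilizer (G₄ L)ᵐᵒᵖ v)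

theorem stable4_iff_isStable (c : Fin 14 → L) : Stable4 c ↔ (ofCoords c).IsStable := by
  have orbit_eq : {c' | ∃ g : G₄ L, toV4 c' = act4 g (toV4 c)}
      = ofCoords ⁻¹' orbit (G₄ L)ᵐᵒᵖ (ofCoords c) := by
    ext c'
    simp only [toV4_eq_toPoly c, toV4_eq_act4_iff]
    exact (MulOpposite.op_surjective.exists (p := (· • ofCoords c = ofCoords c'))).symm
  have fixes_iff (g : G₄ L) :
      act4 g (toV4 c) = toV4 c ↔ .op g ∈ stabilizer (G₄ L)ᵐᵒᵖ (ofCoords c) := by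
    rw [toV4_eq_toPoly, ← toPoly_op_smul, toPoly_injective.eq_iff, mem_stabilizer_iff]
  rw [Stable4, orbit_eq, ← Set.finite_coe_iff]
  exact and_congr_right' (MulOpposite.opEquiv.subtypeEquiv fixes_iff).finite_iff

theorem isStable_iff_of_mem_orbit {v w : V4 L} (h : w ∈ orbit (G₄ L)ᵐᵒᵖ v) :
    w.IsStable ↔ v.IsStable := by
  rw [IsStable, IsStable, orbit_eq_iff.2 h]
  exact and_congr_right' (stabilizerEquivStabilizerOfOrbitRel h).toEquiv.finite_iff

end Field

section CommRing

variable {R : Type*} [CommRing R]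

/-- The dual cyclic vector `F = aUX² + dWY² + jWXZ + kUYZ`, `G = mU`. -/
@[simps]
def dualCyclic (a d j k m : R) : V4 R := ⟨dualCyclicU a k, dualCyclicW d j, m, 0⟩

theorem quartic_dualCyclic (a d j k m : R) :
    (dualCyclic a d j k m).quartic = ⟨-(m * (a * k ^ 2)), 0, 0, -(m * (d * j ^ 2)), 0⟩ := by
  simp only [quartic, dualCyclic, disc_dualCyclicU, disc_dualCyclicW,
    mixedDisc_dualCyclicU_dualCyclicW, mixedDisc_dualCyclicW_dualCyclicU, mul_zero, zero_mul,
    neg_zero, add_zero, mul_neg]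

theorem I_quartic_dualCyclic (a d j k m : R) : (dualCyclic a d j k m).quartic.I = 0 := by
  rw [quartic_dualCyclic, BinaryQuartic.I]
  ring

theorem J_quartic_dualCyclic (a d j k m : R) :
    (dualCyclic a d j k m).quartic.J = 27 * (a * d ^ 2 * k ^ 2 * j ^ 4 * m ^ 3) := by
  rw [quartic_dualCyclic, BinaryQuartic.J]
  ring

/-- The element of the diagonal torus of `G₄` with parameters `x` in `SL₂`, `y, z` in `SL₃` and
`t` in the last factor. -/
def torus (x y z t : Rˣ) : G₄ R :=
  (⟨!![↑x, 0; 0, ↑x⁻¹], by simp [Matrix.det_fin_two]⟩,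
    ⟨!![↑y, 0, 0; 0, ↑z, 0; 0, 0, ↑(y * z)⁻¹], by
      simp [Matrix.det_fin_three, ← Units.val_mul]⟩, t)

theorem dualCyclic_smul_torus (a d j k m : R) (x y z t : Rˣ) :
    dualCyclic a d j k m <• torus x y z t
      = dualCyclic (↑(t⁻¹ * x * y ^ 2) * a) (↑(t⁻¹ * x⁻¹ * z ^ 2) * d) (↑(t⁻¹ * x⁻¹ * z⁻¹) * j)
        (↑(t⁻¹ * x * y⁻¹) * k) (↑(t ^ 3 * x) * m) := by
  have hy := y.mul_inv
  have hz := z.mul_inv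
  rw [smul_eq]
  ext <;> simp only [torus, scale, substUW, substXYZ, dualCyclic, dualCyclicU, dualCyclicW, comp,
    eval, QuadraticMap.polar, Matrix.col_apply, Pi.add_apply, Matrix.of_apply, Matrix.cons_val,
    add_xx, add_yy, add_zz, add_xy, add_xz, add_yz, smul_xx, smul_yy, smul_zz, smul_xy, smul_xz,
    smul_yz, mul_inv_rev, Units.val_mul, Units.val_pow_eq_pow_val] <;> grind

end CommRing

section Field

variable {L : Type*} [Field L]

theorem dualCyclic_mem_orbit [IsAlgClosed L] (a : L) (d j k m : Lˣ) :
    dualCyclic (a * d ^ 2 * k ^ 2 * j ^ 4 * m ^ 3) 1 1 1 1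
      ∈ orbit (G₄ L)ᵐᵒᵖ (dualCyclic a d j k m) := by
  obtain ⟨r, hr⟩ :=
    IsAlgClosed.exists_pow_nat_eq (↑(j ^ 2 * m ^ 3 * d)⁻¹ : L) (n := 6) (by simp)
  have hr0 : r ≠ 0 := by
    rintro rfl
    exact Units.ne_zero _ (hr.symm.trans (zero_pow (by simp)))
  lift r to Lˣ using hr0.isUnit with t
  rw [← Units.val_pow_eq_pow_val, Units.val_inj, eq_inv_iff_mul_eq_one, Units.ext_iff] at hr
  -- `x = 1 / (m t³)`, `y = k / (m t⁴)`, `z = j m t²` solve the equations for `m`, `k` and `j`;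
  -- the one for `d` then reads `t⁶ j² m³ d = 1`.
  refine ⟨.op (torus (m * t ^ 3)⁻¹ (k * (m * t ^ 4)⁻¹) (j * m * t ^ 2) t), ?_⟩
  refine (dualCyclic_smul_torus ..).trans ?_
  push_cast at hr ⊢
  congr 1
  · field_simp
    linear_combination -(a * (1 + j ^ 2 * m ^ 3 * d * t ^ 6)) * hr
  · field_simp
    linear_combination hr
  all_goals field_simp

theorem exists_mem_orbit_n_eq_zero (v : V4 L) : ∃ w ∈ orbit (G₄ L)ᵐᵒᵖ v, w.n = 0 := by
  by_cases hn : v.n = 0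
  · exact ⟨v, mem_orbit_self v, hn⟩
  let A : SL(2, L) := ⟨!![0, -v.n; v.n⁻¹, v.m], by simp [Matrix.det_fin_two, hn]⟩
  refine ⟨v <• (A, 1, 1), mem_orbit .., ?_⟩
  rw [smul_eq]
  simp only [A, scale_n, substUW_n, substXYZ_m, substXYZ_n, Matrix.of_apply, Matrix.cons_val]
  ring

theorem exists_mem_orbit_quartic_c_eq_zero (h3 : (3 : L) ≠ 0) {v : V4 L} (hn : v.n = 0)
    (hd : v.quartic.d ≠ 0) : ∃ w ∈ orbit (G₄ L)ᵐᵒᵖ v, w.n = 0 ∧ w.quartic.c = 0 := by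
  let s := -v.quartic.c / (3 * v.quartic.d)
  let A : SL(2, L) := ⟨!![1, 0; s, 1], by simp [Matrix.det_fin_two]⟩
  refine ⟨v <• (A, 1, 1), mem_orbit .., ?_, ?_⟩
  · rw [smul_eq]
    simp [A, hn]
  · have he := quartic_e_eq_zero hn
    rw [quartic_smul]
    simp only [A, BinaryQuartic.comp_c, he, Matrix.of_apply, Matrix.cons_val, s]
    field

theorem exists_dualCyclic_mem_orbit_of_quartic_c_eq_zero [IsAlgClosed L] (h3 : (3 : L) ≠ 0)
    {v : V4 L} (hn : v.n = 0) (hc : v.quartic.c = 0) (hI : v.quartic.I = 0)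
    (hJ : v.quartic.J ≠ 0) : ∃ a d j k m : L, dualCyclic a d j k m ∈ orbit (G₄ L)ᵐᵒᵖ v := by
  have he := quartic_e_eq_zero hn
  have had : v.quartic.a ≠ 0 ∧ v.quartic.d ≠ 0 := by
    constructor <;> rintro h <;> exact hJ (by simp [BinaryQuartic.J, hc, h, he])
  have hb : v.quartic.b = 0 := by
    simpa [BinaryQuartic.I, hc, he, h3, had.2] using hI
  simp only [quartic, hn, zero_mul, add_zero, mul_ne_zero_iff] at had hb hc
  obtain ⟨⟨hm, hU⟩, -, hW⟩ := had
  obtain ⟨B, a, d, j, k, hBU, hBW⟩ := exists_smul_eq_dualCyclic h3 hU hW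
    ((mul_eq_zero_iff_left hm).1 hb) ((mul_eq_zero_iff_left hm).1 hc)
  refine ⟨a, d, j, k, v.m, .op (1, B, 1), ?_⟩
  have hB : (v <• ((1, B, 1) : G₄ L)) = v.substXYZ B := by
    rw [smul_eq]
    ext <;> simp
  refine hB.trans ?_
  rw [substXYZ, ← smul_eq_comp, ← smul_eq_comp, hBU, hBW, hn, dualCyclic]

theorem exists_dualCyclic_mem_orbit [IsAlgClosed L] (h3 : (3 : L) ≠ 0) {v : V4 L}
    (hI : v.quartic.I = 0) (hJ : v.quartic.J ≠ 0) :
    ∃ a d j k m : L, dualCyclic a d j k m ∈ orbit (G₄ L)ᵐᵒᵖ v := by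
  obtain ⟨w, hwv, hw⟩ := exists_mem_orbit_n_eq_zero v
  rw [← orbit_eq_iff.2 hwv]
  rw [← I_quartic_eq_of_mem_orbit hwv] at hI
  rw [← J_quartic_eq_of_mem_orbit hwv] at hJ
  have he := quartic_e_eq_zero hw
  have hd : w.quartic.d ≠ 0 := by
    intro hd
    have hc : w.quartic.c = 0 := by simpa [BinaryQuartic.I, he, hd] using hI
    exact hJ (by simp [BinaryQuartic.J, he, hd, hc])
  obtain ⟨u, huw, hu, hc⟩ := exists_mem_orbit_quartic_c_eq_zero h3 hw hd
  rw [← orbit_eq_iff.2 huw]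
  rw [← I_quartic_eq_of_mem_orbit huw] at hI
  rw [← J_quartic_eq_of_mem_orbit huw] at hJ
  exact exists_dualCyclic_mem_orbit_of_quartic_c_eq_zero h3 hu hc hI hJ

theorem orbit_dualCyclic [IsAlgClosed L] (h3 : (3 : L) ≠ 0) {c : L} (hc : c ≠ 0) :
    orbit (G₄ L)ᵐᵒᵖ (dualCyclic c 1 1 1 1) = {v | v.quartic.I = 0 ∧ v.quartic.J = 27 * c} := by
  have h27 : (27 : L) ≠ 0 := by
    rw [show (27 : L) = 3 ^ 3 by norm_num]
    exact pow_ne_zero 3 h3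
  ext v
  constructor
  · intro h
    refine ⟨(I_quartic_eq_of_mem_orbit h).trans (I_quartic_dualCyclic ..), ?_⟩
    rw [J_quartic_eq_of_mem_orbit h, J_quartic_dualCyclic]
    ring
  · rintro ⟨hI, hJ⟩
    obtain ⟨a, d, j, k, m, h⟩ :=
      exists_dualCyclic_mem_orbit h3 hI (hJ ▸ mul_ne_zero h27 hc)
    have hJ' := (J_quartic_eq_of_mem_orbit h).trans hJ
    rw [J_quartic_dualCyclic, mul_right_inj' h27] at hJ'
    have hne := hJ' ▸ hc
    simp only [mul_ne_zero_iff, pow_ne_zero_iff, ne_eq, OfNat.ofNat_ne_zero, not_false_eq_true]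
      at hne
    obtain ⟨⟨⟨⟨-, hd⟩, hk⟩, hj⟩, hm⟩ := hne
    have h' := dualCyclic_mem_orbit a (.mk0 d hd) (.mk0 j hj) (.mk0 k hk) (.mk0 m hm)
    simp only [Units.val_mk0, hJ'] at h'
    exact mem_orbit_symm.1 (orbit_eq_iff.2 h ▸ h')

theorem isZariskiClosed_orbit_dualCyclic [IsAlgClosed L] (h3 : (3 : L) ≠ 0) {c : L} (hc : c ≠ 0) :
    IsZariskiClosed (ofCoords ⁻¹' orbit (G₄ L)ᵐᵒᵖ (dualCyclic c 1 1 1 1)) := by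
  let f := (ofCoords (MvPolynomial.X : Fin 14 → MvPolynomial (Fin 14) L)).quartic
  refine ⟨{f.I, f.J - .C (27 * c)}, ?_⟩
  ext x
  rw [orbit_dualCyclic h3 hc]
  simp [f, BinaryQuartic.I, BinaryQuartic.J, quartic, disc, mixedDisc, sub_eq_zero]

end Field

end V4

namespace TernaryQuadratic

section Field

variable {K : Type*} [Field K]

theorem eval_smul_right (q : TernaryQuadratic K) (r : K) (v : Fin 3 → K) :
    q.eval (r • v) = r ^ 2 * q.eval v := by
  simp only [eval, Pi.smul_apply, smul_eq_mul]
  ring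

/-- The common zeros of two ternary quadratic forms in the projective plane. -/
def baseLocus (p q : TernaryQuadratic K) : Set (ℙ K (Fin 3 → K)) :=
  {P | p.eval P.rep = 0 ∧ q.eval P.rep = 0}

theorem mk_mem_baseLocus {p q : TernaryQuadratic K} {v : Fin 3 → K} (hv : v ≠ 0) :
    .mk K v hv ∈ baseLocus p q ↔ p.eval v = 0 ∧ q.eval v = 0 := by
  obtain ⟨r, hr⟩ := Projectivization.exists_smul_eq_mk_rep K v hv
  simp [baseLocus, ← hr, Units.smul_def, eval_smul_right]

theorem smul_mem_baseLocus {p q : TernaryQuadratic K} {B : SL(3, K)} {r s : K}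
    (hp : p.comp B = r • p) (hq : q.comp B = s • q) {P : ℙ K (Fin 3 → K)}
    (hP : P ∈ baseLocus p q) : B • P ∈ baseLocus p q := by
  induction P with | h v hv
  rw [mk_mem_baseLocus] at hP
  rw [Projectivization.smul_mk, mk_mem_baseLocus]
  change p.eval (B.1.mulVec v) = 0 ∧ q.eval (B.1.mulVec v) = 0
  rw [← eval_comp, ← eval_comp, hp, hq, eval_smul, eval_smul, hP.1, hP.2, mul_zero, mul_zero]
  exact ⟨rfl, rfl⟩

theorem baseLocus_dualCyclic_subset (c : K) :
    baseLocus (dualCyclicU c 1) (dualCyclicW (1 : K) 1)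
      ⊆ insert (.mk K ![0, 0, 1] (by simp))
        ((fun y => .mk K ![1, y, -y ^ 2] (by simp)) '' {y | y ^ 3 = c}) := by
  intro P hP
  induction P with | h v hv
  rw [mk_mem_baseLocus] at hP
  simp only [eval, dualCyclicU, dualCyclicW] at hP
  obtain ⟨hU, hW⟩ := hP
  by_cases hx : v 0 = 0
  · have hy : v 1 = 0 := by simpa [hx] using hW
    refine .inl ((Projectivization.mk_eq_mk_iff' ..).2 ⟨v 2, ?_⟩)
    ext i
    fin_cases i <;> simp [hx, hy]
  · have hz : v 2 = -v 1 ^ 2 / v 0 := by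
      field_simp
      linear_combination hW
    refine .inr ⟨v 1 / v 0, ?_, (Projectivization.mk_eq_mk_iff' ..).2 ⟨(v 0)⁻¹, ?_⟩⟩
    · rw [Set.mem_ofPred_eq, div_pow, div_eq_iff (pow_ne_zero 3 hx)]
      linear_combination v 1 * hW - v 0 * hU
    · ext i
      fin_cases i
      · simp [hx]
      · simp [div_eq_inv_mul]
      · change (v 0)⁻¹ * v 2 = -(v 1 / v 0) ^ 2
        rw [hz]
        field_simp

theorem finite_baseLocus_dualCyclic (c : K) :
    (baseLocus (dualCyclicU c 1) (dualCyclicW (1 : K) 1)).Finite := by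
  have finite_roots : {y : K | y ^ 3 = c}.Finite :=
    (Polynomial.nthRootsFinset 3 c).finite_toSet.subset fun y hy => by simpa using hy
  exact ((finite_roots.image _).insert _).subset (baseLocus_dualCyclic_subset c)

theorem exists_eq_scalar_of_comp_eq_smul {c r : K} {B : SL(3, K)}
    (hU : (dualCyclicU c 1).comp B = r • dualCyclicU c 1)
    (hW : (dualCyclicW (1 : K) 1).comp B = r • dualCyclicW (1 : K) 1) (hx : B 0 2 = 0)
    (hy : B 1 2 = 0) :
    ∃ ζ : K, ζ ^ 3 = 1 ∧ r = ζ ^ 2 ∧ B.1 = Matrix.scalar (Fin 3) ζ := by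
  have hdet : (B 0 0 * B 1 1 - B 0 1 * B 1 0) * B 2 2 = 1 := by
    have hB := B.det_coe
    rw [Matrix.det_fin_three, hx, hy] at hB
    linear_combination hB
  have hz : B 2 2 ≠ 0 := right_ne_zero_of_mul_eq_one hdet
  simp only [TernaryQuadratic.ext_iff, comp, eval, QuadraticMap.polar, Matrix.col_apply,
    Pi.add_apply, dualCyclicU, dualCyclicW, smul_xx, smul_yy, smul_zz, smul_xy, smul_xz, smul_yz,
    hx, hy] at hU hW
  obtain ⟨-, -, -, U_xy, U_xz, U_yz⟩ := hU
  obtain ⟨-, W_yy, -, W_xy, W_xz, W_yz⟩ := hW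
  have h10 : B 1 0 = 0 := (mul_eq_zero_iff_right hz).1 (by linear_combination U_xz)
  have h01 : B 0 1 = 0 := (mul_eq_zero_iff_right hz).1 (by linear_combination W_yz)
  simp only [h10, h01] at hdet U_xy W_xy W_yy
  have h00 : B 0 0 ≠ 0 := by grind
  have h11 : B 1 1 ≠ 0 := by grind
  have h20 : B 2 0 = 0 := (mul_eq_zero_iff_left h11).1 (by linear_combination U_xy)
  have h21 : B 2 1 = 0 := (mul_eq_zero_iff_left h00).1 (by linear_combination W_xy)
  have h00_eq : B 0 0 = B 2 2 := by grind
  have h11_eq : B 1 1 = B 2 2 := by grind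
  refine ⟨B 2 2, ?_, by grind, ?_⟩
  · rw [h00_eq, h11_eq] at hdet
    linear_combination hdet
  · ext i j
    fin_cases i <;> fin_cases j <;>
      simp [hx, hy, h10, h01, h20, h21, h00_eq, h11_eq]

end Field

end TernaryQuadratic

namespace V4

open TernaryQuadratic

variable {L : Type*} [Field L] {c : L}

theorem exists_eq_scalar_of_dualCyclic_smul_eq (h3 : (3 : L) ≠ 0) {g : G₄ L}
    (h : dualCyclic c 1 1 1 1 <• g = dualCyclic c 1 1 1 1) :
    ∃ α : L, α ^ 2 = 1 ∧ g.1.1 = Matrix.scalar (Fin 2) α ∧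
      (dualCyclicU c 1).comp g.2.1 = (g.2.2 * α) • dualCyclicU c 1 ∧
      (dualCyclicW (1 : L) 1).comp g.2.1 = (g.2.2 * α) • dualCyclicW (1 : L) 1 := by
  obtain ⟨A, B, t⟩ := g
  have ht := t.mul_inv
  have hquartic := quartic_smul (dualCyclic c 1 1 1 1) (A, B, t)
  have hdet := A.det_coe
  rw [Matrix.det_fin_two] at hdet
  rw [h, quartic_dualCyclic] at hquartic
  rw [smul_eq] at h
  have h01 : A 0 1 = 0 := by simpa using congrArg V4.n h
  have hc : -(3 * (A 0 0 * A 1 0 * A 1 1 ^ 2)) = 0 := by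
    have := congrArg BinaryQuartic.c hquartic
    simp only [BinaryQuartic.comp_c, h01] at this
    linear_combination -this
  have hd : A 0 0 * A 1 1 ^ 3 = 1 := by
    have := congrArg BinaryQuartic.d hquartic
    simp only [BinaryQuartic.comp_d, h01] at this
    linear_combination this
  have h10 : A 1 0 = 0 := by grind
  have h11 : A 1 1 = A 0 0 := by grind
  refine ⟨A 0 0, by grind, ?_, ?_, ?_⟩
  · ext i j
    fin_cases i <;> fin_cases j <;> simp [h01, h10, h11]
  · refine ext_of_eval_eq fun v => ?_
    have hU := congrArg (eval · v) (congrArg V4.conicU h)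
    simp only [scale, substUW, substXYZ, dualCyclic, eval_smul, eval_add, h10] at hU ⊢
    grind
  · refine ext_of_eval_eq fun v => ?_
    have hW := congrArg (eval · v) (congrArg V4.conicW h)
    simp only [scale, substUW, substXYZ, dualCyclic, eval_smul, eval_add, h01] at hW ⊢
    grind

/-- The pair of scalar matrices `(α, ζ)` with `α² = ζ³ = 1`, together with `t = ζ² α`. If `3 ≠ 0`,
these are the elements of `G₄` that fix `dualCyclic c 1 1 1 1` and the base point `[0 : 0 : 1]`. -/
def scalarElement (s : rootsOfUnity 2 L × rootsOfUnity 3 L) : G₄ L :=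
  torus s.1 s.2 s.2 (s.2 ^ 2 * s.1)

theorem mem_range_scalarElement {g : G₄ L} {α ζ : L} (hα : α ^ 2 = 1) (hζ : ζ ^ 3 = 1)
    (hA : g.1.1 = Matrix.scalar (Fin 2) α) (hB : g.2.1.1 = Matrix.scalar (Fin 3) ζ)
    (ht : g.2.2 * α = ζ ^ 2) : g ∈ Set.range scalarElement := by
  lift α to Lˣ using IsUnit.of_pow_eq_one hα two_ne_zero
  lift ζ to Lˣ using IsUnit.of_pow_eq_one hζ three_ne_zero
  have hα' : α ^ 2 = 1 := Units.ext (by simpa using hα)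
  have hζ' : ζ ^ 3 = 1 := Units.ext (by simpa using hζ)
  have hα_inv : α⁻¹ = α := inv_eq_of_mul_eq_one_left (by rw [← pow_two, hα'])
  have hζ_inv : (ζ * ζ)⁻¹ = ζ := inv_eq_of_mul_eq_one_left (by rw [← hζ', pow_three])
  refine ⟨(⟨α, hα'⟩, ⟨ζ, hζ'⟩), Prod.ext (Subtype.ext ?_) (Prod.ext (Subtype.ext ?_) ?_)⟩
  · rw [hA]
    ext i j
    fin_cases i <;> fin_cases j <;> simp only [scalarElement, torus, hα_inv] <;> simp
  · rw [hB]
    ext i j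
    fin_cases i <;> fin_cases j <;> simp only [scalarElement, torus, hζ_inv] <;> simp
  · refine Units.ext ?_
    simp only [scalarElement, torus, Units.val_mul, Units.val_pow_eq_pow_val]
    rw [← ht, mul_assoc, ← pow_two, hα, mul_one]

theorem finite_stabilizer_dualCyclic (h3 : (3 : L) ≠ 0) :
    Finite (stabilizer (G₄ L)ᵐᵒᵖ (dualCyclic c 1 1 1 1)) := by
  let Γ := (stabilizer (G₄ L)ᵐᵒᵖ (dualCyclic c 1 1 1 1)).unop
  suffices Finite Γ from Finite.of_equiv Γ (Subgroup.equivOp Γ)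
  let P : ℙ L (Fin 3 → L) := .mk L ![0, 0, 1] (by simp)
  have P_mem : P ∈ baseLocus (dualCyclicU c 1) (dualCyclicW 1 1) := by
    simp [P, mk_mem_baseLocus, eval]
  refine finite_subgroup_of_forall_smul_mem Γ ((MonoidHom.fst _ _).comp (MonoidHom.snd _ _)) P
    (finite_baseLocus_dualCyclic c) (fun g hg => ?_) (Set.finite_range scalarElement)
    fun g hg hgP => ?_
  · obtain ⟨α, -, -, hU, hW⟩ := exists_eq_scalar_of_dualCyclic_smul_eq h3 hg
    exact smul_mem_baseLocus hU hW P_mem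
  · obtain ⟨α, hα, hA, hU, hW⟩ := exists_eq_scalar_of_dualCyclic_smul_eq h3 hg
    obtain ⟨r, hr⟩ := (Projectivization.mk_eq_mk_iff' ..).1 hgP
    change r • ![0, 0, 1] = g.2.1.1.mulVec ![0, 0, 1] at hr
    have hx : g.2.1 0 2 = 0 := by
      simpa [Matrix.mulVec, dotProduct, Fin.sum_univ_three] using (congrFun hr 0).symm
    have hy : g.2.1 1 2 = 0 := by
      simpa [Matrix.mulVec, dotProduct, Fin.sum_univ_three] using (congrFun hr 1).symm
    obtain ⟨ζ, hζ, ht, hB⟩ := exists_eq_scalar_of_comp_eq_smul hU hW hx hy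
    exact mem_range_scalarElement hα hζ hA hB ht

theorem dualCyclic_zero_mem_orbit [IsAlgClosed L] (h3 : (3 : L) = 0) (c : L) :
    dualCyclic 0 1 1 1 1 ∈ orbit (G₄ L)ᵐᵒᵖ (dualCyclic c 1 1 1 1) := by
  obtain ⟨e, he⟩ := IsAlgClosed.exists_pow_nat_eq (-c) (n := 3) (by simp)
  let A : SL(2, L) := ⟨!![1, 0; e, 1], by simp [Matrix.det_fin_two]⟩
  let B : SL(3, L) := ⟨!![1, 0, 0; -e, 1, 0; -e ^ 2, -e, 1], by simp [Matrix.det_fin_three]⟩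
  have key : (dualCyclic c 1 1 1 1 <• ((A, B, 1) : G₄ L)) = dualCyclic 0 1 1 1 1 := by
    rw [smul_eq]
    ext <;> simp only [A, B, scale, substUW, substXYZ, dualCyclic, dualCyclicU, dualCyclicW, comp,
      eval, QuadraticMap.polar, Matrix.col_apply, Pi.add_apply, Matrix.of_apply, Matrix.cons_val,
      add_xx, add_yy, add_zz, add_xy, add_xz, add_yz, smul_xx, smul_yy, smul_zz, smul_xy, smul_xz,
      smul_yz, inv_one, Units.val_one] <;> grind
  exact ⟨_, key⟩

theorem not_isZariskiClosed_orbit_dualCyclic [IsAlgClosed L] (h3 : (3 : L) = 0) (c : L) :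
    ¬ IsZariskiClosed (ofCoords ⁻¹' orbit (G₄ L)ᵐᵒᵖ (dualCyclic c 1 1 1 1)) := by
  intro hclosed
  rw [← orbit_eq_iff.2 (dualCyclic_zero_mem_orbit h3 c)] at hclosed
  have hsmul (s : L) (hs : s ≠ 0) : s • ![(0 : L), 0, 0, 1, 0, 0, 0, 0, 0, 1, 1, 0, 1, 0]
      ∈ ofCoords ⁻¹' orbit (G₄ L)ᵐᵒᵖ (dualCyclic 0 1 1 1 1) := by
    lift s to Lˣ using hs.isUnit
    refine ⟨.op (torus (s ^ 2)⁻¹ (s ^ 4)⁻¹ 1 s), (dualCyclic_smul_torus ..).trans ?_⟩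
    push_cast
    ext <;> simp only [dualCyclic, dualCyclicU, dualCyclicW, ofCoords, Pi.smul_apply, smul_eq_mul,
      Matrix.cons_val] <;> field
  obtain ⟨g, hg : ofCoords 0 <• g.unop = _⟩ :=
    mem_orbit_symm.1 (hclosed.zero_mem_of_forall_smul_mem hsmul)
  rw [smul_eq] at hg
  simpa using congrArg V4.m hg

theorem isStable_dualCyclic_iff [IsAlgClosed L] (a d j k m : Lˣ) :
    (dualCyclic (a : L) d j k m).IsStable ↔ (3 : L) ≠ 0 := by
  rw [← isStable_iff_of_mem_orbit (dualCyclic_mem_orbit ..)]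
  refine ⟨fun h h3 => not_isZariskiClosed_orbit_dualCyclic h3 _ h.1, fun h3 =>
    ⟨isZariskiClosed_orbit_dualCyclic h3 (by simp), finite_stabilizer_dualCyclic h3⟩⟩

end V4

theorem dual_cyclic_stable4_iff_p_ne_three_general {L : Type*} [Field L] [IsAlgClosed L]
    (a d j k m : Lˣ) :
    Stable4 ![(a : L), 0, 0, (d : L), 0, 0, 0, 0, 0, (j : L), (k : L), 0, (m : L), 0] ↔
      (3 : L) ≠ 0 := by
  rw [V4.stable4_iff_isStable]
  exact V4.isStable_dualCyclic_iff ..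

/-
STATEMENT 9 (Corollary 4.3(2)): for p prime and L an algebraic closure of 𝔽_p, the dual
cyclic vector (F, G) with F = aUX² + dWY² + jWXZ + kUYZ and G = mU, where
a, d, j, k, m ∈ Lˣ, is stable for the action of G₄ = SL₂(L) × SL₃(L) × Lˣ if and only
if p ≠ 3.  Coordinate placement (order a,…,n): index 0 = a, 3 = d, 9 = j, 10 = k, 12 = m.
-/
theorem dual_cyclic_stable4_iff_p_ne_three
    (p : ℕ) (hp : p.Prime)
    {L : Type*} [Field L] [IsAlgClosed L] [CharP L p]
    (a d j k m : Lˣ) :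
    Stable4 ![(a : L), 0, 0, (d : L), 0, 0, 0, 0, 0, (j : L), (k : L), 0, (m : L), 0] ↔
      p ≠ 3 := by
  rw [dual_cyclic_stable4_iff_p_ne_three_general, ← Nat.cast_ofNat, Ne, CharP.cast_eq_zero_iff L p,
    Nat.prime_dvd_prime_iff_eq hp Nat.prime_three]
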